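/- Let n ≥ 2 and 0 < a < b. Suppose u and v are C² on Ā, that f and g are continuous on Ā with −Δu(x) = f(x) and −Δv(x) = g(x) for every x ∈ A, and that ∫_S f(rξ) dσ(ξ) = ∫_S g(rξ) dσ(ξ) for every r ∈ (a,b). Then the function r ↦ r^{n−1} ∫_S D(u−v)(rξ)(ξ) dσ(ξ) is constant on [a,b]; that is, for all r₁, r₂ ∈ [a,b], r₂^{n−1} ∫_S D(u−v)(r₂ξ)(ξ) dσ(ξ) = r₁^{n−1} ∫_S D(u−v)(r₁ξ)(ξ) dσ(ξ). -/

import Mathlib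

open MeasureTheory Metric Set Real
open scoped InnerProductSpace ENNReal Classical

noncomputable section

abbrev Euc (n : ℕ) := EuclideanSpace ℝ (Fin n)

/-- The Laplacian: sum of second partial derivatives. -/
def lap {n : ℕ} (u : Euc n → ℝ) (x : Euc n) : ℝ :=
  ∑ i : Fin n, fderiv ℝ (fun y => fderiv ℝ u y (EuclideanSpace.single i 1)) x
    (EuclideanSpace.single i 1)

/-- Surface measure on the unit sphere: (n-1)-dimensional Hausdorff measure restricted
to the sphere. -/
def sphereMeasure (n : ℕ) : Measure (Euc n) :=
  (μH[(n : ℝ) - 1]).restrict (sphere (0 : Euc n) 1)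

/-- First standard basis vector. -/
def e₁ (n : ℕ) : Euc n := if h : 0 < n then EuclideanSpace.single (⟨0, h⟩ : Fin n) 1 else 0

/-- Open polar cap of geodesic radius θ centered at e₁. -/
def polarCap (n : ℕ) (θ : ℝ) : Set (Euc n) :=
  {ξ | ξ ∈ sphere (0 : Euc n) 1 ∧ Real.cos θ < ⟪e₁ n, ξ⟫_ℝ}

/-- Decreasing rearrangement of `g` with respect to the measure `μ`. -/
def decRearr {X : Type*} [MeasurableSpace X] (μ : Measure X) (g : X → ℝ) (t : ℝ) : ℝ :=
  sInf {s : ℝ | μ {x | s < g x} ≤ ENNReal.ofReal t}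

/-- Spherical rearrangement of a function on the unit sphere. -/
def sphRearr (n : ℕ) (g : Euc n → ℝ) (ξ : Euc n) : ℝ :=
  decRearr (sphereMeasure n) g
    ((sphereMeasure n (polarCap n (Real.arccos ⟪e₁ n, ξ⟫_ℝ))).toReal)

/-- Cap symmetrization: spherical rearrangement sphere-by-sphere. -/
def capSymm (n : ℕ) (f : Euc n → ℝ) (x : Euc n) : ℝ :=
  if x = 0 then f 0 else sphRearr n (fun ξ => f (‖x‖ • ξ)) (‖x‖⁻¹ • x)

/-- Open spherical shell. -/
def shell (n : ℕ) (a b : ℝ) : Set (Euc n) := {x | a < ‖x‖ ∧ ‖x‖ < b}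

/-- `u` is C² on an open neighborhood of the closure of `A`. -/
def IsC2OnClosure {n : ℕ} (u : Euc n → ℝ) (A : Set (Euc n)) : Prop :=
  ∃ U, IsOpen U ∧ closure A ⊆ U ∧ ContDiffOn ℝ 2 u U

open Filter Topology Module
open scoped Laplacian

/-!
An orthogonally invariant measure on the unit sphere `S` annihilates the derivative of any function
along an infinitesimal rotation `x ↦ ⟪e, x⟫ c - ⟪c, x⟫ e`. With `e` running through an orthonormal
basis and the function being `⟪e, ·⟫ f`, these identities add up to
`∫_S Df(ξ)(c - ⟪c, ξ⟫ ξ) = (n - 1) ∫_S ⟪c, ξ⟫ f(ξ)`. Applied to the components of `ξ ↦ Dw(rξ)`, this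
is the integrated polar form of the Laplacian,
`r ∫_S Δw(rξ) = r ∫_S D²w(rξ)(ξ, ξ) + (n - 1) ∫_S Dw(rξ)(ξ)`, which says that
`r ^ (n - 1) ∫_S Dw(rξ)(ξ)` has derivative `r ^ (n - 1) ∫_S Δw(rξ)`. For `w = u - v` the latter
integral is zero.
-/

section CompactSupport

variable {X F : Type*} [MeasurableSpace X] [NormedAddCommGroup F] {μ : Measure X}
  [IsFiniteMeasure μ] {K : Set X}

theorem integrable_of_continuousOn_of_ae_mem [TopologicalSpace X] [T2Space X]
    [OpensMeasurableSpace X] (hK : IsCompact K) (hμK : ∀ᵐ x ∂μ, x ∈ K) {f : X → F}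
    (hf : ContinuousOn f K) : Integrable f μ := by
  rw [← Measure.restrict_eq_self_of_ae_mem hμK]
  exact hf.integrableOn_compact hK

variable [NormedSpace ℝ F]

theorem integrable_fderiv_apply_of_ae_mem [NormedAddCommGroup X] [NormedSpace ℝ X]
    [OpensMeasurableSpace X] (hK : IsCompact K) (hμK : ∀ᵐ x ∂μ, x ∈ K) {f : X → F} {T : X → X}
    (hf : ∀ x ∈ K, ContDiffAt ℝ 1 f x) (hT : ContinuousOn T K) :
    Integrable (fun x ↦ fderiv ℝ f x (T x)) μ :=
  integrable_of_continuousOn_of_ae_mem hK hμK fun x hx ↦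
    ((hf x hx).continuousAt_fderiv one_ne_zero).continuousWithinAt.clm_apply (hT x hx)

theorem hasDerivAt_integral_of_contDiffAt_of_ae_mem [NormedAddCommGroup X] [NormedSpace ℝ X]
    [OpensMeasurableSpace X] (hK : IsCompact K) (hμK : ∀ᵐ x ∂μ, x ∈ K) {G : ℝ → X → F}
    {G' : X → F} {t₀ : ℝ} (hG : ∀ x ∈ K, ContDiffAt ℝ 1 ↿G (t₀, x))
    (hG' : ∀ x ∈ K, HasDerivAt (G · x) (G' x) t₀) :
    HasDerivAt (fun t ↦ ∫ x, G t x ∂μ) (∫ x, G' x ∂μ) t₀ := by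
  let D (t : ℝ) (x : X) : F := fderiv ℝ ↿G (t, x) (1, 0)
  have hderiv {t x} (h : ContDiffAt ℝ 1 ↿G (t, x)) : HasDerivAt (G · x) (D t x) t :=
    (h.differentiableAt one_ne_zero).hasFDerivAt.comp_hasDerivAt (f := (·, x)) t
      ((hasDerivAt_id t).prodMk (hasDerivAt_const t x))
  have hDcont {t x} (h : ContDiffAt ℝ 1 ↿G (t, x)) : ContinuousAt ↿D (t, x) :=
    (h.continuousAt_fderiv one_ne_zero).clm_apply continuousAt_const
  have hGcont {t} (h : ∀ x ∈ K, ContDiffAt ℝ 1 ↿G (t, x)) : Integrable (G t) μ :=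
    integrable_of_continuousOn_of_ae_mem hK hμK fun x hx ↦
      ((h x hx).continuousAt.comp (f := (t, ·)) (by fun_prop)).continuousWithinAt
  have hDint : Integrable (D t₀) μ :=
    integrable_of_continuousOn_of_ae_mem hK hμK fun x hx ↦
      ((hDcont (hG x hx)).comp (f := (t₀, ·)) (by fun_prop)).continuousWithinAt
  have hnear : ∀ᶠ t in 𝓝 t₀, ∀ x ∈ K, ContDiffAt ℝ 1 ↿G (t, x) :=
    hK.eventually_forall_of_forall_eventually fun x hx ↦ (hG x hx).eventually (by simp)
  obtain ⟨ε, hε, hball⟩ := nhds_basis_closedBall.eventually_iff.1 hnear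
  obtain ⟨C, hC⟩ : ∃ C, ∀ p ∈ closedBall t₀ ε ×ˢ K, ‖↿D p‖ ≤ C :=
    ((isCompact_closedBall t₀ ε).prod hK).exists_bound_of_continuousOn fun p hp ↦
      (hDcont (hball hp.1 p.2 hp.2)).continuousWithinAt
  have hDG' : ∫ x, D t₀ x ∂μ = ∫ x, G' x ∂μ :=
    integral_congr_ae <| hμK.mono fun x hx ↦ (hderiv (hG x hx)).unique (hG' x hx)
  rw [← hDG']
  exact (hasDerivAt_integral_of_dominated_loc_of_deriv_le (closedBall_mem_nhds t₀ hε)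
    (hnear.mono fun t ht ↦ (hGcont ht).aestronglyMeasurable) (hGcont hG)
    hDint.aestronglyMeasurable (hμK.mono fun x hx t ht ↦ hC (t, x) ⟨ht, hx⟩)
    (integrable_const C) (hμK.mono fun x hx t ht ↦ hderiv (hball ht x hx))).2

end CompactSupport

section InfinitesimalRotation

variable {E F ι : Type*} [NormedAddCommGroup E] [InnerProductSpace ℝ E]
  [NormedAddCommGroup F] [NormedSpace ℝ F] [Fintype ι]

/-- The generator of the rotations in the plane of `e` and `c`, which turns `e` towards `c` when
these are orthonormal. -/
def infinitesimalRotation (e c : E) : E →L[ℝ] E :=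
  InnerProductSpace.rankOne ℝ c e - InnerProductSpace.rankOne ℝ e c

@[simp]
theorem infinitesimalRotation_apply (e c x : E) :
    infinitesimalRotation e c x = ⟪e, x⟫_ℝ • c - ⟪c, x⟫_ℝ • e := rfl

theorem infinitesimalRotation_mem_skewAdjoint [CompleteSpace E] (e c : E) :
    infinitesimalRotation e c ∈ skewAdjoint (E →L[ℝ] E) := by
  simp [skewAdjoint.mem_iff, infinitesimalRotation, ContinuousLinearMap.star_eq_adjoint]

theorem sum_inner_smul_infinitesimalRotation (e : OrthonormalBasis ι ℝ E) (c x : E) :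
    ∑ i, ⟪e i, x⟫_ℝ • infinitesimalRotation (e i) c x = ‖x‖ ^ 2 • c - ⟪c, x⟫_ℝ • x := by
  simp only [infinitesimalRotation_apply, smul_sub, Finset.sum_sub_distrib, smul_smul,
    ← Finset.sum_smul, ← pow_two, e.sum_sq_inner_right]
  simp only [mul_comm _ ⟪c, x⟫_ℝ, ← smul_smul, ← Finset.smul_sum, e.sum_repr']

theorem sum_inner_infinitesimalRotation (e : OrthonormalBasis ι ℝ E) (c x : E) :
    ∑ i, ⟪e i, infinitesimalRotation (e i) c x⟫_ℝ = -((finrank ℝ E - 1) * ⟪c, x⟫_ℝ) := by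
  have hcx : ∑ i, ⟪e i, x⟫_ℝ * ⟪e i, c⟫_ℝ = ⟪c, x⟫_ℝ := by
    simpa only [real_inner_comm, mul_comm] using e.sum_inner_mul_inner c x
  simp only [infinitesimalRotation_apply, inner_sub_right, inner_smul_right,
    Finset.sum_sub_distrib, hcx, real_inner_self_eq_norm_sq, e.norm_eq_one,
    finrank_eq_card_basis e.toBasis, one_pow, mul_one, Finset.sum_const, Finset.card_univ,
    nsmul_eq_mul]
  ring

theorem sum_fderiv_inner_smul_infinitesimalRotation (e : OrthonormalBasis ι ℝ E) {f : E → F}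
    {ξ : E} (hξ : ‖ξ‖ = 1) (hf : DifferentiableAt ℝ f ξ) (c : E) :
    ∑ i, fderiv ℝ (fun x ↦ ⟪e i, x⟫_ℝ • f x) ξ (infinitesimalRotation (e i) c ξ) =
      fderiv ℝ f ξ (c - ⟪c, ξ⟫_ℝ • ξ) - ((finrank ℝ E : ℝ) - 1) • ⟪c, ξ⟫_ℝ • f ξ := by
  have hprod (i) (h : E) : fderiv ℝ (fun x ↦ ⟪e i, x⟫_ℝ • f x) ξ h =
      ⟪e i, ξ⟫_ℝ • fderiv ℝ f ξ h + ⟪e i, h⟫_ℝ • f ξ :=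
    DFunLike.congr_fun ((innerSL ℝ (e i)).hasFDerivAt.smul hf.hasFDerivAt).fderiv h
  simp only [hprod, Finset.sum_add_distrib, ← map_smul (fderiv ℝ f ξ), ← map_sum,
    ← Finset.sum_smul, sum_inner_smul_infinitesimalRotation, sum_inner_infinitesimalRotation, hξ,
    one_pow, one_smul]
  module

end InfinitesimalRotation

section Invariance

variable {E F : Type*} [NormedAddCommGroup E] [InnerProductSpace ℝ E] [MeasurableSpace E]
  [NormedAddCommGroup F] [NormedSpace ℝ F] {μ : Measure E}

/-- Invariance of a measure under the orthogonal group of `E`. -/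
def IsOrthogonallyInvariant (μ : Measure E) : Prop :=
  ∀ Q : E ≃ₗᵢ[ℝ] E, MeasurePreserving Q μ μ

variable [BorelSpace E]

theorem IsOrthogonallyInvariant.integral_comp (hμ : IsOrthogonallyInvariant μ)
    (Q : E ≃ₗᵢ[ℝ] E) (f : E → F) : ∫ x, f (Q x) ∂μ = ∫ x, f x ∂μ :=
  (hμ Q).integral_comp Q.toHomeomorph.measurableEmbedding f

variable [IsFiniteMeasure μ]

theorem IsOrthogonallyInvariant.integral_fderiv_skewAdjoint_eq_zero [CompleteSpace E]
    (hμ : IsOrthogonallyInvariant μ) {K : Set E} (hK : IsCompact K) (hμK : ∀ᵐ x ∂μ, x ∈ K)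
    {f : E → F} (hf : ∀ x ∈ K, ContDiffAt ℝ 1 f x) {A : E →L[ℝ] E}
    (hA : A ∈ skewAdjoint (E →L[ℝ] E)) :
    ∫ x, fderiv ℝ f x (A x) ∂μ = 0 := by
  -- The library's lemmas on `NormedSpace.exp` ask for a `ℚ`-algebra.
  let : NormedAlgebra ℚ (E →L[ℝ] E) := .restrictScalars ℚ ℝ _
  let Q (t : ℝ) : E →L[ℝ] E := NormedSpace.exp (t • A)
  have hQ0 : Q 0 = 1 := by simp [Q]
  have hQsmooth : ContDiffAt ℝ 1 Q 0 :=
    (NormedSpace.exp_analytic (𝕂 := ℝ) _).contDiffAt.comp 0 (by fun_prop)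
  have hQderiv : HasDerivAt Q A 0 := by
    simpa using hasDerivAt_exp_smul_const A (0 : ℝ)
  have hQunitary (t : ℝ) : Q t ∈ unitary (E →L[ℝ] E) :=
    NormedSpace.exp_mem_unitary_of_mem_skewAdjoint (skewAdjoint.smul_mem t hA)
  have hconst (t : ℝ) : ∫ x, f (Q t x) ∂μ = ∫ x, f x ∂μ :=
    hμ.integral_comp (Unitary.linearIsometryEquiv ⟨Q t, hQunitary t⟩) f
  have hderiv : HasDerivAt (fun t ↦ ∫ x, f (Q t x) ∂μ) (∫ x, fderiv ℝ f x (A x) ∂μ) 0 := by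
    refine hasDerivAt_integral_of_contDiffAt_of_ae_mem (G := fun t x ↦ f (Q t x)) hK hμK
      (fun x hx ↦ ?_) fun x hx ↦ ?_
    · have hfx : ContDiffAt ℝ 1 f (Q 0 x) := by simpa [hQ0] using hf x hx
      exact hfx.comp (f := fun p : ℝ × E ↦ Q p.1 p.2) (0, x)
        ((hQsmooth.comp (f := Prod.fst) (0, x) contDiffAt_fst).clm_apply contDiffAt_snd)
    · have hfx : HasFDerivAt f (fderiv ℝ f x) (Q 0 x) := by
        simpa [hQ0] using ((hf x hx).differentiableAt one_ne_zero).hasFDerivAt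
      exact (hfx.comp_hasDerivAt (f := (Q · x)) 0
        (hQderiv.clm_apply (hasDerivAt_const 0 x))).congr_deriv (by simp)
  simp only [hconst] at hderiv
  exact hderiv.unique (hasDerivAt_const 0 _)

end Invariance

section Sphere

variable {E F : Type*} [NormedAddCommGroup E] [InnerProductSpace ℝ E] [FiniteDimensional ℝ E]
  [NormedAddCommGroup F] [NormedSpace ℝ F]

theorem laplacian_eq_sum_fderiv_fderiv {ι : Type*} [Fintype ι] (e : OrthonormalBasis ι ℝ E)
    (w : E → F) (x : E) : Δ w x = ∑ i, fderiv ℝ (fderiv ℝ w) x (e i) (e i) := by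
  simp [InnerProductSpace.laplacian_eq_iteratedFDeriv_orthonormalBasis w e,
    iteratedFDeriv_two_apply]

variable [MeasurableSpace E] [BorelSpace E] {μ : Measure E} [IsFiniteMeasure μ]

theorem IsOrthogonallyInvariant.integral_fderiv_tangential (hμ : IsOrthogonallyInvariant μ)
    (hμS : ∀ᵐ ξ ∂μ, ξ ∈ sphere (0 : E) 1) {f : E → F}
    (hf : ∀ ξ ∈ sphere (0 : E) 1, ContDiffAt ℝ 1 f ξ) (c : E) :
    ∫ ξ, fderiv ℝ f ξ (c - ⟪c, ξ⟫_ℝ • ξ) ∂μ =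
      ((finrank ℝ E : ℝ) - 1) • ∫ ξ, ⟪c, ξ⟫_ℝ • f ξ ∂μ := by
  let e := stdOrthonormalBasis ℝ E
  have hS : IsCompact (sphere (0 : E) 1) := isCompact_sphere 0 1
  have hsmooth (i) {ξ : E} (hξ : ξ ∈ sphere (0 : E) 1) :
      ContDiffAt ℝ 1 (fun x ↦ ⟪e i, x⟫_ℝ • f x) ξ :=
    (contDiffAt_const.inner ℝ contDiffAt_id).smul (hf ξ hξ)
  have hcancel : ∫ ξ, (fderiv ℝ f ξ (c - ⟪c, ξ⟫_ℝ • ξ) -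
      ((finrank ℝ E : ℝ) - 1) • ⟪c, ξ⟫_ℝ • f ξ) ∂μ = 0 := by
    rw [← integral_congr_ae (hμS.mono fun ξ hξ ↦
        sum_fderiv_inner_smul_infinitesimalRotation e (mem_sphere_zero_iff_norm.1 hξ)
          ((hf ξ hξ).differentiableAt one_ne_zero) c),
      integral_finsetSum _ fun i _ ↦ integrable_fderiv_apply_of_ae_mem hS hμS
        (fun ξ ↦ hsmooth i) (by fun_prop)]
    exact Finset.sum_eq_zero fun i _ ↦ hμ.integral_fderiv_skewAdjoint_eq_zero hS hμS
      (fun ξ ↦ hsmooth i) (infinitesimalRotation_mem_skewAdjoint (e i) c)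
  rwa [integral_sub (integrable_fderiv_apply_of_ae_mem hS hμS hf (by fun_prop)),
    integral_smul, sub_eq_zero] at hcancel
  refine (integrable_of_continuousOn_of_ae_mem hS hμS fun ξ hξ ↦ ?_).smul _
  exact (ContinuousAt.smul (by fun_prop) (hf ξ hξ).continuousAt).continuousWithinAt

theorem IsOrthogonallyInvariant.integral_tangential_divergence {ι : Type*} [Fintype ι]
    (hμ : IsOrthogonallyInvariant μ) (hμS : ∀ᵐ ξ ∂μ, ξ ∈ sphere (0 : E) 1)
    (e : OrthonormalBasis ι ℝ E) {Φ : E → E →L[ℝ] F}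
    (hΦ : ∀ ξ ∈ sphere (0 : E) 1, ContDiffAt ℝ 1 Φ ξ) :
    ∫ ξ, (∑ i, fderiv ℝ Φ ξ (e i) (e i) - fderiv ℝ Φ ξ ξ ξ) ∂μ =
      ((finrank ℝ E : ℝ) - 1) • ∫ ξ, Φ ξ ξ ∂μ := by
  have hS : IsCompact (sphere (0 : E) 1) := isCompact_sphere 0 1
  have hcomp (i) : ∀ ξ ∈ sphere (0 : E) 1, ContDiffAt ℝ 1 (Φ · (e i)) ξ := fun ξ hξ ↦
    (hΦ ξ hξ).clm_apply contDiffAt_const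
  have hdiv {ξ : E} (hξ : ξ ∈ sphere (0 : E) 1) :
      ∑ i, fderiv ℝ (Φ · (e i)) ξ (e i - ⟪e i, ξ⟫_ℝ • ξ) =
        ∑ i, fderiv ℝ Φ ξ (e i) (e i) - fderiv ℝ Φ ξ ξ ξ := by
    have happly (i) (h : E) : fderiv ℝ (Φ · (e i)) ξ h = fderiv ℝ Φ ξ h (e i) := by
      simp [fderiv_clm_apply ((hΦ ξ hξ).differentiableAt one_ne_zero) (differentiableAt_const _)]
    simp only [happly, map_sub, map_smul, sub_apply, smul_apply, Finset.sum_sub_distrib]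
    simp only [← map_smul, ← map_sum, e.sum_repr']
  have hexpand (ξ : E) : ∑ i, ⟪e i, ξ⟫_ℝ • Φ ξ (e i) = Φ ξ ξ := by
    simp only [← map_smul, ← map_sum, e.sum_repr']
  calc ∫ ξ, (∑ i, fderiv ℝ Φ ξ (e i) (e i) - fderiv ℝ Φ ξ ξ ξ) ∂μ
      = ∫ ξ, ∑ i, fderiv ℝ (Φ · (e i)) ξ (e i - ⟪e i, ξ⟫_ℝ • ξ) ∂μ :=
        integral_congr_ae (hμS.mono fun ξ hξ ↦ (hdiv hξ).symm)
    _ = ∑ i, ∫ ξ, fderiv ℝ (Φ · (e i)) ξ (e i - ⟪e i, ξ⟫_ℝ • ξ) ∂μ :=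
        integral_finsetSum _ fun i _ ↦
          integrable_fderiv_apply_of_ae_mem hS hμS (hcomp i) (by fun_prop)
    _ = ((finrank ℝ E : ℝ) - 1) • ∑ i, ∫ ξ, ⟪e i, ξ⟫_ℝ • Φ ξ (e i) ∂μ := by
        rw [Finset.smul_sum]
        exact Finset.sum_congr rfl fun i _ ↦ hμ.integral_fderiv_tangential hμS (hcomp i) (e i)
    _ = ((finrank ℝ E : ℝ) - 1) • ∫ ξ, Φ ξ ξ ∂μ := by
        rw [← integral_finsetSum]
        · simp only [hexpand]
        · refine fun i _ ↦ integrable_of_continuousOn_of_ae_mem hS hμS fun ξ hξ ↦ ?_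
          exact (ContinuousAt.smul (by fun_prop)
            (hcomp i ξ hξ).continuousAt).continuousWithinAt

theorem integrable_fderiv_fderiv_smul (hμS : ∀ᵐ ξ ∂μ, ξ ∈ sphere (0 : E) 1) {w : E → F} {r : ℝ}
    (hw : ∀ ξ ∈ sphere (0 : E) 1, ContDiffAt ℝ 2 w (r • ξ)) {T₁ T₂ : E → E}
    (hT₁ : Continuous T₁) (hT₂ : Continuous T₂) :
    Integrable (fun ξ ↦ fderiv ℝ (fderiv ℝ w) (r • ξ) (T₁ ξ) (T₂ ξ)) μ := by
  refine integrable_of_continuousOn_of_ae_mem (isCompact_sphere 0 1) hμS fun ξ hξ ↦ ?_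
  have hDw : ContDiffAt ℝ 1 (fderiv ℝ w) (r • ξ) := (hw ξ hξ).fderiv_right (by norm_num)
  have hD2w : ContinuousAt (fun ξ ↦ fderiv ℝ (fderiv ℝ w) (r • ξ)) ξ :=
    (hDw.continuousAt_fderiv one_ne_zero).comp (by fun_prop)
  exact ContinuousAt.continuousWithinAt (by fun_prop)

theorem integrable_laplacian_smul (hμS : ∀ᵐ ξ ∂μ, ξ ∈ sphere (0 : E) 1) {w : E → F} {r : ℝ}
    (hw : ∀ ξ ∈ sphere (0 : E) 1, ContDiffAt ℝ 2 w (r • ξ)) :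
    Integrable (fun ξ ↦ Δ w (r • ξ)) μ := by
  simp only [laplacian_eq_sum_fderiv_fderiv (stdOrthonormalBasis ℝ E)]
  exact integrable_finsetSum _ fun i _ ↦
    integrable_fderiv_fderiv_smul hμS hw continuous_const continuous_const

theorem IsOrthogonallyInvariant.smul_integral_laplacian_smul (hμ : IsOrthogonallyInvariant μ)
    (hμS : ∀ᵐ ξ ∂μ, ξ ∈ sphere (0 : E) 1) {w : E → F} {r : ℝ}
    (hw : ∀ ξ ∈ sphere (0 : E) 1, ContDiffAt ℝ 2 w (r • ξ)) :
    r • ∫ ξ, Δ w (r • ξ) ∂μ = r • ∫ ξ, fderiv ℝ (fderiv ℝ w) (r • ξ) ξ ξ ∂μ +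
      ((finrank ℝ E : ℝ) - 1) • ∫ ξ, fderiv ℝ w (r • ξ) ξ ∂μ := by
  let e := stdOrthonormalBasis ℝ E
  have hDw : ∀ ξ ∈ sphere (0 : E) 1, ContDiffAt ℝ 1 (fun ξ ↦ fderiv ℝ w (r • ξ)) ξ := fun ξ hξ ↦
    ((hw ξ hξ).fderiv_right (by norm_num)).comp ξ (by fun_prop)
  rw [← hμ.integral_tangential_divergence hμS e hDw, ← sub_eq_iff_eq_add', ← smul_sub,
    ← integral_sub (integrable_laplacian_smul hμS hw)
      (integrable_fderiv_fderiv_smul hμS hw (T₁ := fun ξ ↦ ξ) (T₂ := fun ξ ↦ ξ)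
        continuous_id continuous_id), ← integral_smul]
  simp only [laplacian_eq_sum_fderiv_fderiv e, fderiv_comp_smul, smul_sub, Finset.smul_sum,
    smul_apply]

theorem hasDerivAt_integral_fderiv_smul (hμS : ∀ᵐ ξ ∂μ, ξ ∈ sphere (0 : E) 1) {w : E → F} {r : ℝ}
    (hw : ∀ ξ ∈ sphere (0 : E) 1, ContDiffAt ℝ 2 w (r • ξ)) :
    HasDerivAt (fun t ↦ ∫ ξ, fderiv ℝ w (t • ξ) ξ ∂μ)
      (∫ ξ, fderiv ℝ (fderiv ℝ w) (r • ξ) ξ ξ ∂μ) r := by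
  have hDw : ∀ ξ ∈ sphere (0 : E) 1, ContDiffAt ℝ 1 (fderiv ℝ w) (r • ξ) := fun ξ hξ ↦
    (hw ξ hξ).fderiv_right (by norm_num)
  refine hasDerivAt_integral_of_contDiffAt_of_ae_mem (G := fun t ξ ↦ fderiv ℝ w (t • ξ) ξ)
    (isCompact_sphere 0 1) hμS (fun ξ hξ ↦ ?_) fun ξ hξ ↦ ?_
  · have hscale : ContDiffAt ℝ 1 (fun p : ℝ × E ↦ p.1 • p.2) (r, ξ) := by fun_prop
    have hcomp : ContDiffAt ℝ 1 (fun p : ℝ × E ↦ fderiv ℝ w (p.1 • p.2)) (r, ξ) :=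
      ContDiffAt.comp (f := fun p : ℝ × E ↦ p.1 • p.2) (r, ξ) (hDw ξ hξ) hscale
    exact hcomp.clm_apply contDiffAt_snd
  · have hray : HasDerivAt (fun t : ℝ ↦ t • ξ) ξ r := by
      simpa using (hasDerivAt_id r).smul_const ξ
    have hDw' : HasDerivAt (fun t ↦ fderiv ℝ w (t • ξ)) (fderiv ℝ (fderiv ℝ w) (r • ξ) ξ) r :=
      ((hDw ξ hξ).differentiableAt one_ne_zero).hasFDerivAt.comp_hasDerivAt (f := (· • ξ)) r hray
    simpa using hDw'.clm_apply (hasDerivAt_const r ξ)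

theorem IsOrthogonallyInvariant.hasDerivAt_pow_smul_integral_fderiv_smul
    (hμ : IsOrthogonallyInvariant μ) (hμS : ∀ᵐ ξ ∂μ, ξ ∈ sphere (0 : E) 1) {d : ℕ}
    (hd : finrank ℝ E = d + 1) {w : E → F} {r : ℝ} (hr : r ≠ 0)
    (hw : ∀ ξ ∈ sphere (0 : E) 1, ContDiffAt ℝ 2 w (r • ξ)) :
    HasDerivAt (fun t ↦ t ^ d • ∫ ξ, fderiv ℝ w (t • ξ) ξ ∂μ)
      (r ^ d • ∫ ξ, Δ w (r • ξ) ∂μ) r := by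
  have hpow : (d : ℝ) * r ^ (d - 1) = r ^ d * (r⁻¹ * d) := by
    rcases d with - | d
    · simp
    · rw [add_tsub_cancel_right, pow_succ]
      field_simp
  have hlap := hμ.smul_integral_laplacian_smul hμS hw
  rw [hd, ← eq_inv_smul_iff₀ hr] at hlap
  refine ((hasDerivAt_pow d r).smul (hasDerivAt_integral_fderiv_smul hμS hw)).congr_deriv ?_
  rw [hlap, hpow, smul_add, inv_smul_smul₀ hr]
  push_cast
  module

theorem eq_of_continuousOn_Icc_of_hasDerivAt_zero {g : ℝ → F} {a b : ℝ} (hab : a < b)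
    (hg : ContinuousOn g (Icc a b)) (hg' : ∀ r ∈ Ioo a b, HasDerivAt g 0 r) {r₁ r₂ : ℝ}
    (hr₁ : r₁ ∈ Icc a b) (hr₂ : r₂ ∈ Icc a b) : g r₂ = g r₁ := by
  obtain ⟨c, hc⟩ := isOpen_Ioo.exists_is_const_of_deriv_eq_zero isPreconnected_Ioo
    (fun r hr ↦ (hg' r hr).differentiableAt.differentiableWithinAt) fun r hr ↦ (hg' r hr).deriv
  have hconst : EqOn g (fun _ ↦ c) (Icc a b) :=
    EqOn.of_subset_closure hc hg continuousOn_const Ioo_subset_Icc_self (closure_Ioo hab.ne).ge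
  rw [hconst hr₁, hconst hr₂]

theorem IsOrthogonallyInvariant.pow_smul_integral_fderiv_smul_eq (hμ : IsOrthogonallyInvariant μ)
    (hμS : ∀ᵐ ξ ∂μ, ξ ∈ sphere (0 : E) 1) {d : ℕ} (hd : finrank ℝ E = d + 1) {a b : ℝ}
    (ha : 0 ≤ a) (hab : a < b) {w : E → F}
    (hw : ∀ r ∈ Icc a b, ∀ ξ ∈ sphere (0 : E) 1, ContDiffAt ℝ 2 w (r • ξ))
    (hΔw : ∀ r ∈ Ioo a b, ∫ ξ, Δ w (r • ξ) ∂μ = 0) {r₁ r₂ : ℝ} (hr₁ : r₁ ∈ Icc a b)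
    (hr₂ : r₂ ∈ Icc a b) :
    r₂ ^ d • ∫ ξ, fderiv ℝ w (r₂ • ξ) ξ ∂μ = r₁ ^ d • ∫ ξ, fderiv ℝ w (r₁ • ξ) ξ ∂μ := by
  refine eq_of_continuousOn_Icc_of_hasDerivAt_zero
    (g := fun r ↦ r ^ d • ∫ ξ, fderiv ℝ w (r • ξ) ξ ∂μ) hab (fun r hr ↦ ?_) (fun r hr ↦ ?_) hr₁ hr₂
  · exact ((continuousAt_id.pow d).smul
      (hasDerivAt_integral_fderiv_smul hμS (hw r hr)).continuousAt).continuousWithinAt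
  · simpa only [hΔw r hr, smul_zero] using hμ.hasDerivAt_pow_smul_integral_fderiv_smul hμS hd
      (ha.trans_lt hr.1).ne' (hw r (Ioo_subset_Icc_self hr))

theorem radial_flux_constant_shell_general (hμ : IsOrthogonallyInvariant μ)
    (hμS : ∀ᵐ ξ ∂μ, ξ ∈ sphere (0 : E) 1) {d : ℕ} (hd : finrank ℝ E = d + 1) {a b : ℝ}
    (ha : 0 ≤ a) (hab : a < b) {u v f g : E → F}
    (hu : ∀ x, ‖x‖ ∈ Icc a b → ContDiffAt ℝ 2 u x) (hv : ∀ x, ‖x‖ ∈ Icc a b → ContDiffAt ℝ 2 v x)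
    (hupde : ∀ x, ‖x‖ ∈ Ioo a b → -Δ u x = f x) (hvpde : ∀ x, ‖x‖ ∈ Ioo a b → -Δ v x = g x)
    (hfg : ∀ r ∈ Ioo a b, ∫ ξ, f (r • ξ) ∂μ = ∫ ξ, g (r • ξ) ∂μ) {r₁ r₂ : ℝ}
    (hr₁ : r₁ ∈ Icc a b) (hr₂ : r₂ ∈ Icc a b) :
    r₂ ^ d • ∫ ξ, fderiv ℝ (fun x ↦ u x - v x) (r₂ • ξ) ξ ∂μ =
      r₁ ^ d • ∫ ξ, fderiv ℝ (fun x ↦ u x - v x) (r₁ • ξ) ξ ∂μ := by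
  have hnorm {r} (hr : r ∈ Icc a b) {ξ : E} (hξ : ξ ∈ sphere (0 : E) 1) : ‖r • ξ‖ = r := by
    rw [norm_smul_of_nonneg (ha.trans hr.1), mem_sphere_zero_iff_norm.1 hξ, mul_one]
  have hu' : ∀ r ∈ Icc a b, ∀ ξ ∈ sphere (0 : E) 1, ContDiffAt ℝ 2 u (r • ξ) :=
    fun r hr ξ hξ ↦ hu _ (by rwa [hnorm hr hξ])
  have hv' : ∀ r ∈ Icc a b, ∀ ξ ∈ sphere (0 : E) 1, ContDiffAt ℝ 2 v (r • ξ) :=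
    fun r hr ξ hξ ↦ hv _ (by rwa [hnorm hr hξ])
  refine hμ.pow_smul_integral_fderiv_smul_eq hμS hd ha hab
    (fun r hr ξ hξ ↦ (hu' r hr ξ hξ).sub (hv' r hr ξ hξ)) (fun r hr ↦ ?_) hr₁ hr₂
  have hr' := Ioo_subset_Icc_self hr
  have hmean {w h : E → F} (hpde : ∀ x, ‖x‖ ∈ Ioo a b → -Δ w x = h x) :
      ∫ ξ, h (r • ξ) ∂μ = -∫ ξ, Δ w (r • ξ) ∂μ := by
    rw [← integral_neg]
    exact integral_congr_ae <| hμS.mono fun ξ hξ ↦ (hpde _ (by rwa [hnorm hr' hξ])).symm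
  calc ∫ ξ, Δ (fun x ↦ u x - v x) (r • ξ) ∂μ
      = ∫ ξ, (Δ u (r • ξ) - Δ v (r • ξ)) ∂μ := integral_congr_ae <| hμS.mono fun ξ hξ ↦
        ContDiffAt.laplacian_sub (hu' r hr' ξ hξ) (hv' r hr' ξ hξ)
    _ = ∫ ξ, Δ u (r • ξ) ∂μ - ∫ ξ, Δ v (r • ξ) ∂μ :=
        integral_sub (integrable_laplacian_smul hμS (hu' r hr'))
          (integrable_laplacian_smul hμS (hv' r hr'))
    _ = 0 := by
        rw [sub_eq_zero, ← neg_inj, ← hmean hupde, ← hmean hvpde, hfg r hr]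

end Sphere

section Hausdorff

theorem hausdorffMeasure_image_lt_top_of_contDiff {V Y : Type*} [NormedAddCommGroup V]
    [NormedSpace ℝ V] [FiniteDimensional ℝ V] [NormedAddCommGroup Y] [NormedSpace ℝ Y]
    [MeasurableSpace Y] [BorelSpace Y] {f : V → Y} (hf : ContDiff ℝ 1 f) {K : Set V}
    (hK : IsCompact K) : μH[finrank ℝ V] (f '' K) < ∞ := by
  let : MeasurableSpace V := borel V
  have : BorelSpace V := ⟨rfl⟩
  obtain ⟨C, hC⟩ :=
    hf.locallyLipschitz.locallyLipschitzOn.exists_lipschitzOnWith_of_compact hK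
  refine (hC.hausdorffMeasure_image_le (Nat.cast_nonneg _)).trans_lt ?_
  exact ENNReal.mul_lt_top (by simp) hK.measure_lt_top

theorem hausdorffMeasure_sphere_lt_top {E : Type*} [NormedAddCommGroup E] [InnerProductSpace ℝ E]
    [MeasurableSpace E] [BorelSpace E] {d : ℕ} [Fact (finrank ℝ E = d + 1)] :
    μH[d] (sphere (0 : E) 1) < ∞ := by
  have : FiniteDimensional ℝ E := .of_fact_finrank_eq_succ d
  refine (isCompact_sphere 0 1).measure_lt_top_of_nhdsWithin fun x hx ↦ ?_
  let p : sphere (0 : E) 1 := ⟨x, hx⟩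
  have hv : ‖((-p : sphere (0 : E) 1) : E)‖ = 1 := norm_eq_of_mem_sphere (-p)
  let chart := (stereographic hv).symm
  have hchart : chart 0 = p := by
    rw [← stereographic_neg_apply p]
    exact (stereographic hv).left_inv (ne_neg_of_mem_unit_sphere ℝ p)
  have hnhds : chart '' closedBall 0 1 ∈ 𝓝 p := by
    have := (isOpenEmbedding_stereographic_symm hv).isOpenMap.image_mem_nhds
      (closedBall_mem_nhds 0 one_pos)
    rwa [hchart] at this
  have hdim := Submodule.finrank_orthogonal_span_singleton (𝕜 := ℝ) (n := d)
    (ne_zero_of_mem_unit_sphere (-p))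
  refine ⟨(↑) '' (chart '' closedBall 0 1), ?_, ?_⟩
  · exact map_nhds_subtype_val p ▸ image_mem_map hnhds
  · have hsmooth : ContDiff ℝ 1 fun y ↦ (chart y : E) :=
      contDiff_stereoInvFunAux.comp (ℝ ∙ ((-p : sphere (0 : E) 1) : E))ᗮ.subtypeL.contDiff
    rw [image_image, ← hdim]
    exact hausdorffMeasure_image_lt_top_of_contDiff hsmooth (isCompact_closedBall 0 1)

end Hausdorff

section SphereMeasure

variable {n : ℕ}

theorem ae_mem_sphere_sphereMeasure : ∀ᵐ ξ ∂(sphereMeasure n), ξ ∈ sphere (0 : Euc n) 1 :=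
  ae_restrict_mem isClosed_sphere.measurableSet

theorem sphereMeasure_restrict_sphere :
    (sphereMeasure n).restrict (sphere (0 : Euc n) 1) = sphereMeasure n :=
  Measure.restrict_eq_self_of_ae_mem ae_mem_sphere_sphereMeasure

theorem isOrthogonallyInvariant_sphereMeasure : IsOrthogonallyInvariant (sphereMeasure n) := by
  intro Q
  have hQ := (Q.toIsometryEquiv.measurePreserving_hausdorffMeasure ((n : ℝ) - 1)).restrict_preimage
    (isClosed_sphere (x := (0 : Euc n)) (ε := 1)).measurableSet
  have hsphere : Q.toIsometryEquiv ⁻¹' sphere (0 : Euc n) 1 = sphere (0 : Euc n) 1 := by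
    ext x
    simp
  rwa [hsphere] at hQ

theorem isFiniteMeasure_sphereMeasure_succ (d : ℕ) : IsFiniteMeasure (sphereMeasure (d + 1)) := by
  have : Fact (finrank ℝ (Euc (d + 1)) = d + 1) := ⟨by simp⟩
  exact ⟨by simpa [sphereMeasure] using hausdorffMeasure_sphere_lt_top (E := Euc (d + 1)) (d := d)⟩

end SphereMeasure

section Shell

variable {n : ℕ}

theorem lap_eq_laplacian {w : Euc n → ℝ} {x : Euc n} (hw : ContDiffAt ℝ 2 w x) :
    lap w x = Δ w x := by
  have hDw : DifferentiableAt ℝ (fderiv ℝ w) x :=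
    (hw.fderiv_right (m := 1) (by norm_num)).differentiableAt one_ne_zero
  simp [lap, laplacian_eq_sum_fderiv_fderiv (EuclideanSpace.basisFun (Fin n) ℝ),
    fderiv_clm_apply hDw (differentiableAt_const _)]

theorem mem_closure_shell {a b : ℝ} (ha : 0 < a) (hab : a < b) {x : Euc n}
    (hx : ‖x‖ ∈ Icc a b) : x ∈ closure (shell n a b) := by
  have hx0 : ‖x‖ ≠ 0 := (ha.trans_le hx.1).ne'
  have hray : MapsTo (fun r : ℝ ↦ (r / ‖x‖) • x) (Ioo a b) (shell n a b) := fun r hr ↦ by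
    have : ‖(r / ‖x‖) • x‖ = r := by
      rw [norm_smul_of_nonneg (div_nonneg (ha.trans hr.1).le (norm_nonneg x)),
        div_mul_cancel₀ _ hx0]
    simpa [shell, this] using hr
  have := hray.closure (by fun_prop)
  rw [closure_Ioo hab.ne] at this
  simpa [hx0] using this hx

theorem IsC2OnClosure.contDiffAt {w : Euc n → ℝ} {A : Set (Euc n)} (hw : IsC2OnClosure w A)
    {x : Euc n} (hx : x ∈ closure A) : ContDiffAt ℝ 2 w x := by
  obtain ⟨U, hU, hAU, hwU⟩ := hw
  exact hwU.contDiffAt (hU.mem_nhds (hAU hx))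

end Shell

/-- If `-Δu = f`, `-Δv = g` on a shell and `f`, `g` have equal means on every sphere
`{|x| = r}`, then `r ↦ r^(n-1) ∫_S ∂_r(u-v)(rξ) dσ(ξ)` is constant on `[a,b]`. -/
theorem radial_flux_constant_shell {n : ℕ} (hn : 2 ≤ n) {a b : ℝ} (ha : 0 < a) (hab : a < b)
    (u v f g : Euc n → ℝ)
    (hu : IsC2OnClosure u (shell n a b)) (hv : IsC2OnClosure v (shell n a b))
    (hf : ContinuousOn f (closure (shell n a b))) (hg : ContinuousOn g (closure (shell n a b)))
    (hupde : ∀ x ∈ shell n a b, -lap u x = f x)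
    (hvpde : ∀ x ∈ shell n a b, -lap v x = g x)
    (hfg : ∀ r ∈ Ioo a b,
      (∫ ξ in sphere (0 : Euc n) 1, f (r • ξ) ∂(sphereMeasure n)) =
        ∫ ξ in sphere (0 : Euc n) 1, g (r • ξ) ∂(sphereMeasure n)) :
    ∀ r₁ ∈ Icc a b, ∀ r₂ ∈ Icc a b,
      r₂ ^ (n - 1) *
          (∫ ξ in sphere (0 : Euc n) 1, fderiv ℝ (fun x => u x - v x) (r₂ • ξ) ξ
            ∂(sphereMeasure n)) =
        r₁ ^ (n - 1) *
          (∫ ξ in sphere (0 : Euc n) 1, fderiv ℝ (fun x => u x - v x) (r₁ • ξ) ξ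
            ∂(sphereMeasure n)) := by
  obtain ⟨d, rfl⟩ : ∃ d, n = d + 1 := ⟨n - 1, by omega⟩
  have := isFiniteMeasure_sphereMeasure_succ d
  have hu' {x} (hx : ‖x‖ ∈ Icc a b) : ContDiffAt ℝ 2 u x :=
    hu.contDiffAt (mem_closure_shell ha hab hx)
  have hv' {x} (hx : ‖x‖ ∈ Icc a b) : ContDiffAt ℝ 2 v x :=
    hv.contDiffAt (mem_closure_shell ha hab hx)
  simp only [sphereMeasure_restrict_sphere] at hfg ⊢
  intro r₁ hr₁ r₂ hr₂
  refine radial_flux_constant_shell_general isOrthogonallyInvariant_sphereMeasure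
    ae_mem_sphere_sphereMeasure finrank_euclideanSpace_fin ha.le hab (fun x ↦ hu') (fun x ↦ hv')
    (fun x hx ↦ ?_) (fun x hx ↦ ?_) hfg hr₁ hr₂
  · rw [← hupde x hx, lap_eq_laplacian (hu' (Ioo_subset_Icc_self hx))]
  · rw [← hvpde x hx, lap_eq_laplacian (hv' (Ioo_subset_Icc_self hx))]
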